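/- There exists a universal constant C > 0 with the following property. Let Γ be a discrete subgroup of SL(2,ℝ), acting on ℍ by Möbius transformations, and let H = {γ ∈ Γ : |tr γ| > 2} denote its set of hyperbolic elements. Suppose the systole s := inf over z ∈ ℍ and γ ∈ H of d(z, γ·z) is strictly positive. Then for every z ∈ ℍ and every j > 0, the set {γ ∈ H : d(z, γ·z) ≤ j} is finite and has cardinality at most C · e^j / min{1, s²}. -/

import Mathlib

/-- The subspace topology on `SL(2, ℝ)` induced from the space of `2 × 2` real matrices. -/
noncomputable instance : TopologicalSpace (Matrix.SpecialLinearGroup (Fin 2) ℝ) :=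
  TopologicalSpace.induced ((↑) : _ → Matrix (Fin 2) (Fin 2) ℝ) inferInstance

/-! After conjugation the base point is `i`, and the elements to be counted are those with
`‖g‖² = 2 cosh d(i, g i) ≤ 2 e^j`.

Suppose first that no elliptic or parabolic element of `Γ` other than `±1` is close to `±1`. If `g`
and `k` have nearby images `g i`, `k i` and nearby bottom rows, then `g⁻¹ k` moves `i` by less than
the systole, so it is not hyperbolic, and it is close to `±1`; hence `k = ±g`. A pigeonhole
argument over dyadic ranges of the length of the bottom row gives the bound.

Otherwise a small such element exists. Choose it, `u`, as small as possible and rotate `Γ` about `i`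
so that `u` lies in the group of matrices `(x y; -κy x)` with `0 ≤ κ ≤ 1`. By Jørgensen's
inequality, an element of the discrete group `Γ` that nearly commutes with `u` belongs to this
group itself, so it is not hyperbolic. Writing `G = g diag(1, κ) gᵀ`, two elements `g` for which `G`
has comparable trace and nearby eigenvector directions therefore lie in the same left coset of this
group, and minimality of `u` bounds the number of elements in each coset. This case needs no lower
bound on the systole.
-/

namespace HyperbolicCounting

open Finset UpperHalfPlane
open scoped MatrixGroups Pointwise

section Pigeonhole

variable {α : Type*} {s : Finset α} {B : ℝ}

lemma card_Icc_floor_le {q : ℝ} (hq : 1 ≤ q) : (#(Icc ⌊-q⌋ ⌊q⌋) : ℝ) ≤ 4 * q := by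
  have hle : ⌊-q⌋ ≤ ⌊q⌋ + 1 := (Int.floor_mono (by linarith)).trans (by lia)
  rw [Int.card_Icc, ← Int.cast_natCast, Int.toNat_of_nonneg (by lia)]
  push_cast
  linarith [Int.floor_le q, Int.lt_floor_add_one (-q)]

lemma card_le_of_box {ι : Type*} [Fintype ι] {f : α → ι → ℝ} {r ε : ι → ℝ}
    (hε : ∀ i, 0 < ε i) (hεr : ∀ i, ε i ≤ r i) (hf : ∀ x ∈ s, ∀ i, |f x i| ≤ r i)
    (hB : ∀ t ⊆ s, (∀ x ∈ t, ∀ y ∈ t, ∀ i, |f x i - f y i| < ε i) → (#t : ℝ) ≤ B) :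
    (#s : ℝ) ≤ (∏ i, 4 * (r i / ε i)) * B := by
  classical
  let cell (x : α) (i : ι) : ℤ := ⌊f x i / ε i⌋
  let cells : Finset (ι → ℤ) := Fintype.piFinset fun i ↦ Icc ⌊-(r i / ε i)⌋ ⌊r i / ε i⌋
  have maps : ∀ x ∈ s, cell x ∈ cells := fun x hx ↦ Fintype.mem_piFinset.2 fun i ↦ by
    have := abs_le.1 (hf x hx i)
    rw [← neg_div, mem_Icc]
    have := (hε i).le
    constructor <;> apply Int.floor_mono <;> gcongr <;> tauto
  have fiber : ∀ c, (#{x ∈ s | cell x = c} : ℝ) ≤ B := fun c ↦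
    hB _ (filter_subset _ _) fun x hx y hy i ↦ by
      have hxy : cell x i = cell y i := by rw [(mem_filter.1 hx).2, (mem_filter.1 hy).2]
      have := Int.abs_sub_lt_one_of_floor_eq_floor hxy
      rwa [← sub_div, abs_div, abs_of_pos (hε i), div_lt_one (hε i)] at this
  have hB₀ : 0 ≤ B := by simpa using hB ∅ (empty_subset s) (by simp)
  calc (#s : ℝ) = ∑ c ∈ cells, (#{x ∈ s | cell x = c} : ℝ) := by
        exact_mod_cast card_eq_sum_card_fiberwise maps
    _ ≤ #cells * B := by simpa using sum_le_card_nsmul cells _ B fun c _ ↦ fiber c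
    _ ≤ (∏ i, 4 * (r i / ε i)) * B := by
        rw [Fintype.card_piFinset, Nat.cast_prod]
        gcongr with i
        exact card_Icc_floor_le ((one_le_div (hε i)).2 (hεr i))

lemma card_le_of_interval {f : α → ℝ} {r ε : ℝ} (hε : 0 < ε) (hεr : ε ≤ r)
    (hf : ∀ x ∈ s, |f x| ≤ r)
    (hB : ∀ t ⊆ s, (∀ x ∈ t, ∀ y ∈ t, |f x - f y| < ε) → (#t : ℝ) ≤ B) :
    (#s : ℝ) ≤ 4 * (r / ε) * B := by
  simpa using card_le_of_box (ι := Unit) (f := fun x _ ↦ f x) (r := fun _ ↦ r) (ε := fun _ ↦ ε)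
    (fun _ ↦ hε) (fun _ ↦ hεr) (fun x hx _ ↦ hf x hx) fun t ht h ↦
      hB t ht fun x hx y hy ↦ h x hx y hy ()

lemma card_le_of_dyadic_of_lt_two_pow_mul {f : α → ℝ} {M : ℝ} (n : ℕ) (hM : 0 ≤ M)
    (hf : ∀ x ∈ s, f x ≤ M ∧ M < 2 ^ n * f x)
    (hB : ∀ t ⊆ s, ∀ ρ > 0, (∀ x ∈ t, ρ ≤ f x ∧ f x ≤ 2 * ρ) → (#t : ℝ) ≤ B * ρ) :
    (#s : ℝ) ≤ B * M := by
  classical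
  have hB₀ : 0 ≤ B := by simpa using hB ∅ (empty_subset s) 1 one_pos (by simp)
  induction n generalizing s M with
  | zero =>
    have : s = ∅ := eq_empty_of_forall_notMem fun x hx ↦ by linarith [hf x hx]
    simpa [this] using mul_nonneg hB₀ hM
  | succ n ih =>
    rcases hM.eq_or_lt with rfl | hM
    · have : s = ∅ := eq_empty_of_forall_notMem fun x hx ↦
        (pos_of_mul_pos_right (hf x hx).2 (by positivity)).not_ge (hf x hx).1
      simp [this]
    have low : (#{x ∈ s | f x ≤ M / 2} : ℝ) ≤ B * (M / 2) := by
      refine ih (by positivity) (fun x hx ↦ ?_) fun t ht ↦ hB t (ht.trans (filter_subset _ _))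
      obtain ⟨hxs, hxM⟩ := mem_filter.1 hx
      have := (hf x hxs).2
      rw [pow_succ', mul_assoc] at this
      exact ⟨hxM, by linarith⟩
    have high : (#{x ∈ s | ¬ f x ≤ M / 2} : ℝ) ≤ B * (M / 2) := by
      refine hB _ (filter_subset _ _) (M / 2) (by positivity) fun x hx ↦ ?_
      obtain ⟨hxs, hxM⟩ := mem_filter.1 hx
      exact ⟨(not_le.1 hxM).le, by linarith [hf x hxs]⟩
    have : (#s : ℝ) = #{x ∈ s | f x ≤ M / 2} + #{x ∈ s | ¬ f x ≤ M / 2} := by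
      exact_mod_cast (card_filter_add_card_filter_not _).symm
    linarith

lemma card_le_of_dyadic {f : α → ℝ} {M : ℝ} (hM : 0 ≤ M)
    (hpos : ∀ x ∈ s, 0 < f x) (hle : ∀ x ∈ s, f x ≤ M)
    (hB : ∀ t ⊆ s, ∀ ρ > 0, (∀ x ∈ t, ρ ≤ f x ∧ f x ≤ 2 * ρ) → (#t : ℝ) ≤ B * ρ) :
    (#s : ℝ) ≤ B * M := by
  rcases s.eq_empty_or_nonempty with rfl | hs
  · have hB₀ : 0 ≤ B := by simpa using hB ∅ subset_rfl 1 one_pos (by simp)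
    simpa using mul_nonneg hB₀ hM
  obtain ⟨x₀, hx₀, hmin⟩ := s.exists_min_image f hs
  obtain ⟨n, hn⟩ := pow_unbounded_of_one_lt (M / f x₀) one_lt_two
  refine card_le_of_dyadic_of_lt_two_pow_mul n hM (fun x hx ↦ ⟨hle x hx, ?_⟩) hB
  calc M < 2 ^ n * f x₀ := (div_lt_iff₀ (hpos x₀ hx₀)).1 hn
    _ ≤ 2 ^ n * f x := by gcongr; exact hmin x hx

lemma card_le_two_of_eq_or_eq_neg [Neg α] (h : ∀ x ∈ s, ∀ y ∈ s, y = x ∨ y = -x) : #s ≤ 2 := by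
  classical
  rcases s.eq_empty_or_nonempty with rfl | ⟨x, hx⟩
  · simp
  · have hsub : s ⊆ {x, -x} := fun y hy ↦ by simpa using h x hx y hy
    exact (card_le_card hsub).trans card_le_two

end Pigeonhole

section SpecialLinearGroup

variable (g k : SL(2, ℝ))

lemma mul_apply (i j : Fin 2) : (g * k) i j = g i 0 * k 0 j + g i 1 * k 1 j := by
  simp [Matrix.mul_apply]

lemma inv_mul_apply_zero (j : Fin 2) : (g⁻¹ * k) 0 j = g 1 1 * k 0 j - g 0 1 * k 1 j := by
  simp [Matrix.mul_apply, Matrix.adjugate_fin_two, sub_eq_add_neg]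

lemma inv_mul_apply_one (j : Fin 2) : (g⁻¹ * k) 1 j = g 0 0 * k 1 j - g 1 0 * k 0 j := by
  simp [Matrix.mul_apply, Matrix.adjugate_fin_two, sub_eq_neg_add]

lemma mul_inv_apply_zero (i : Fin 2) : (g * k⁻¹) i 0 = g i 0 * k 1 1 - g i 1 * k 1 0 := by
  simp [Matrix.mul_apply, Matrix.adjugate_fin_two, sub_eq_add_neg]

lemma mul_inv_apply_one (i : Fin 2) : (g * k⁻¹) i 1 = g i 1 * k 0 0 - g i 0 * k 0 1 := by
  simp [Matrix.mul_apply, Matrix.adjugate_fin_two, sub_eq_neg_add]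

lemma det_eq_one : g 0 0 * g 1 1 - g 0 1 * g 1 0 = 1 := by
  rw [← Matrix.det_fin_two, g.det_coe]

lemma trace_conj : (k * g * k⁻¹).1.trace = g.1.trace := by
  rw [Matrix.trace_fin_two, Matrix.trace_fin_two, mul_inv_apply_zero, mul_inv_apply_one]
  simp only [mul_apply]
  linear_combination (g 0 0 + g 1 1) * det_eq_one k

/-- The squared Frobenius norm `tr (gᵀ g)`. It equals `2 cosh d(i, g i)`, so it measures how far
`g` moves the base point `i`. -/
def frobSq : ℝ := g 0 0 ^ 2 + g 0 1 ^ 2 + g 1 0 ^ 2 + g 1 1 ^ 2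

/-- The entry `b - c` of the antisymmetric part of `g = (a b; c d)`. It is invariant under
conjugation by rotations. -/
def skew : ℝ := g 0 1 - g 1 0

lemma frobSq_eq_trace_skew : frobSq g = g.1.trace ^ 2 - 2 + skew g ^ 2 := by
  rw [Matrix.trace_fin_two, frobSq, skew]
  linear_combination (-2) * det_eq_one g

lemma frobSq_eq_two_add : frobSq g = 2 + (g 0 0 - g 1 1) ^ 2 + (g 0 1 + g 1 0) ^ 2 := by
  rw [frobSq]
  linear_combination 2 * det_eq_one g

lemma eq_one_or_eq_neg_one {h : SL(2, ℝ)} (diag : h 0 0 = h 1 1) (h01 : h 0 1 = 0)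
    (h10 : h 1 0 = 0) : h = 1 ∨ h = -1 := by
  have sq : h 1 1 ^ 2 = 1 := by
    have := det_eq_one h
    rw [diag, h01] at this
    linarith
  refine (sq_eq_one_iff.1 sq).imp (fun h11 ↦ ?_) fun h11 ↦ ?_ <;>
    ext i j <;> fin_cases i <;> fin_cases j <;> simp [*]

end SpecialLinearGroup

section UpperHalfPlane

variable (g : SL(2, ℝ))

lemma apply_zero_eq_smul_I :
    g 0 0 = (g • I).re * g 1 0 + (g • I).im * g 1 1 ∧
      g 0 1 = (g • I).re * g 1 1 - (g • I).im * g 1 0 := by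
  have hden : (g 1 0 : ℂ) * I + g 1 1 ≠ 0 := denom_ne_zero (g : GL (Fin 2) ℝ) I
  have h : ((g • I : ℍ) : ℂ) * (g 1 0 * I + g 1 1) = g 0 0 * I + g 0 1 := by
    rw [coe_specialLinearGroup_apply]
    exact div_mul_cancel₀ _ hden
  exact ⟨by simpa using congrArg Complex.im h.symm, by simpa using congrArg Complex.re h.symm⟩

lemma im_smul_I_mul : (g • I).im * (g 1 0 ^ 2 + g 1 1 ^ 2) = 1 := by
  obtain ⟨h0, h1⟩ := apply_zero_eq_smul_I g
  linear_combination det_eq_one g + g 1 0 * h1 - g 1 1 * h0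

lemma frobSq_eq_smul_I :
    frobSq g = (1 + (g • I).re ^ 2 + (g • I).im ^ 2) * (g 1 0 ^ 2 + g 1 1 ^ 2) := by
  obtain ⟨h0, h1⟩ := apply_zero_eq_smul_I g
  rw [frobSq, h0, h1]
  ring

lemma frobSq_eq_cosh_dist : frobSq g = 2 * Real.cosh (dist I (g • I)) := by
  have := (g • I).im_pos
  rw [cosh_dist', I_re, I_im, frobSq_eq_smul_I, eq_inv_of_mul_eq_one_right (im_smul_I_mul g)]
  field_simp
  ring

end UpperHalfPlane

section NoSmallRotations

lemma frobSq_inv_mul (g k : SL(2, ℝ)) : frobSq (g⁻¹ * k) =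
    2 + (((g • I).re - (k • I).re) ^ 2 + ((g • I).im - (k • I).im) ^ 2) *
      ((g 1 0 ^ 2 + g 1 1 ^ 2) * (k 1 0 ^ 2 + k 1 1 ^ 2)) := by
  have hg := im_smul_I_mul g
  have hk := im_smul_I_mul k
  rw [frobSq_eq_cosh_dist, mul_smul, ← dist_smul g, smul_inv_smul, cosh_dist',
    eq_inv_of_mul_eq_one_right hg, eq_inv_of_mul_eq_one_right hk]
  have := (g • I).im_pos
  have := (k • I).im_pos
  field_simp
  ring

lemma skew_inv_mul (g k : SL(2, ℝ)) : skew (g⁻¹ * k) =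
    ((k • I).re - (g • I).re) * (g 1 0 * k 1 0 + g 1 1 * k 1 1) +
      ((g • I).im + (k • I).im) * (g 1 0 * k 1 1 - g 1 1 * k 1 0) := by
  obtain ⟨hg0, hg1⟩ := apply_zero_eq_smul_I g
  obtain ⟨hk0, hk1⟩ := apply_zero_eq_smul_I k
  rw [skew, inv_mul_apply_zero, inv_mul_apply_one, hg0, hg1, hk0, hk1]
  ring

lemma eq_one_or_eq_neg_one_of_skew_eq_zero {h : SL(2, ℝ)} (htr : |h.1.trace| ≤ 2)
    (hskew : skew h = 0) : h = 1 ∨ h = -1 := by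
  have hsq : h.1.trace ^ 2 ≤ 2 ^ 2 := sq_le_sq.2 (by rwa [abs_two])
  have hfrob : (h 0 0 - h 1 1) ^ 2 + (h 0 1 + h 1 0) ^ 2 ≤ 0 := by
    have := frobSq_eq_two_add h
    rw [frobSq_eq_trace_skew, hskew] at this
    linarith
  have diag : h 0 0 - h 1 1 = 0 := by nlinarith
  have anti : h 0 1 + h 1 0 = 0 := by nlinarith
  unfold skew at hskew
  exact eq_one_or_eq_neg_one (by linarith) (by linarith) (by linarith)

lemma eq_or_eq_neg_of_inv_mul {g k : SL(2, ℝ)} (h : g⁻¹ * k = 1 ∨ g⁻¹ * k = -1) :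
    k = g ∨ k = -g := by
  simpa [inv_mul_eq_iff_eq_mul] using h

variable {Γ : Subgroup SL(2, ℝ)} {σ ρ R : ℝ} {s : Finset SL(2, ℝ)}

lemma abs_apply_one_le (hρ : 0 ≤ ρ) {g : SL(2, ℝ)} (hg : g 1 0 ^ 2 + g 1 1 ^ 2 ≤ ρ ^ 2)
    (i : Fin 2) : |g 1 i| ≤ ρ := by
  refine abs_le_of_sq_le_sq ?_ hρ
  fin_cases i
  exacts [(le_add_of_nonneg_right (sq_nonneg _)).trans hg,
    (le_add_of_nonneg_left (sq_nonneg _)).trans hg]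

lemma im_smul_I_le (hρ : 0 < ρ) {g : SL(2, ℝ)} (hg : ρ ^ 2 ≤ g 1 0 ^ 2 + g 1 1 ^ 2) :
    (g • I).im ≤ 1 / ρ ^ 2 := by
  rw [le_div_iff₀ (by positivity), ← im_smul_I_mul g]
  gcongr

lemma abs_re_smul_I_le (hR : 0 ≤ R) (hρ : 0 < ρ) {g : SL(2, ℝ)} (hgR : frobSq g ≤ R ^ 2)
    (hg : ρ ^ 2 ≤ g 1 0 ^ 2 + g 1 1 ^ 2) : |(g • I).re| ≤ R / ρ := by
  refine abs_le_of_sq_le_sq ?_ (by positivity)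
  rw [div_pow, le_div_iff₀ (by positivity)]
  calc (g • I).re ^ 2 * ρ ^ 2
      ≤ (1 + (g • I).re ^ 2 + (g • I).im ^ 2) * (g 1 0 ^ 2 + g 1 1 ^ 2) := by
        gcongr
        linarith [sq_nonneg (g • I).im]
    _ ≤ R ^ 2 := (frobSq_eq_smul_I g).symm.trans_le hgR

lemma one_le_mul_of_frobSq_le (hR : 0 ≤ R) (hρ : 0 ≤ ρ) {g : SL(2, ℝ)}
    (hgR : frobSq g ≤ R ^ 2) (hg : g 1 0 ^ 2 + g 1 1 ^ 2 ≤ ρ ^ 2) : 1 ≤ R * ρ := by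
  have hy := im_smul_I_mul g
  have im_le : (g • I).im ≤ R ^ 2 :=
    calc (g • I).im = (g • I).im ^ 2 * (g 1 0 ^ 2 + g 1 1 ^ 2) := by
          linear_combination -(g • I).im * hy
      _ ≤ (1 + (g • I).re ^ 2 + (g • I).im ^ 2) * (g 1 0 ^ 2 + g 1 1 ^ 2) := by
        gcongr
        linarith [sq_nonneg (g • I).re]
      _ ≤ R ^ 2 := (frobSq_eq_smul_I g).symm.trans_le hgR
  refine (one_le_sq_iff₀ (by positivity)).1 ?_
  calc 1 = (g • I).im * (g 1 0 ^ 2 + g 1 1 ^ 2) := hy.symm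
    _ ≤ R ^ 2 * ρ ^ 2 := by gcongr
    _ = (R * ρ) ^ 2 := (mul_pow R ρ 2).symm

lemma abs_skew_inv_mul_lt (hσ₁ : σ ≤ 1) (hρ : 0 < ρ) {g k : SL(2, ℝ)}
    (hg : ρ ^ 2 ≤ g 1 0 ^ 2 + g 1 1 ^ 2 ∧ g 1 0 ^ 2 + g 1 1 ^ 2 ≤ (2 * ρ) ^ 2)
    (hk : ρ ^ 2 ≤ k 1 0 ^ 2 + k 1 1 ^ 2 ∧ k 1 0 ^ 2 + k 1 1 ^ 2 ≤ (2 * ρ) ^ 2)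
    (hre : |(g • I).re - (k • I).re| ≤ σ / (128 * ρ ^ 2))
    (h10 : |g 1 0 - k 1 0| ≤ ρ / 512) (h11 : |g 1 1 - k 1 1| ≤ ρ / 512) :
    |skew (g⁻¹ * k)| < 1 / 16 := by
  have dot : |g 1 0 * k 1 0 + g 1 1 * k 1 1| ≤ 4 * ρ ^ 2 := by
    rw [abs_le]
    constructor <;> nlinarith [sq_nonneg (g 1 0 - k 1 0), sq_nonneg (g 1 1 - k 1 1),
      sq_nonneg (g 1 0 + k 1 0), sq_nonneg (g 1 1 + k 1 1)]
  have row := abs_apply_one_le (by positivity) hg.2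
  have cross : |g 1 0 * k 1 1 - g 1 1 * k 1 0| ≤ ρ ^ 2 / 128 :=
    calc |g 1 0 * k 1 1 - g 1 1 * k 1 0|
        = |g 1 1 * (g 1 0 - k 1 0) - g 1 0 * (g 1 1 - k 1 1)| := by congr 1; ring
      _ ≤ 2 * ρ * (ρ / 512) + 2 * ρ * (ρ / 512) := by
          refine (abs_sub _ _).trans ?_
          rw [abs_mul, abs_mul]
          gcongr
          exacts [row 1, row 0]
      _ = ρ ^ 2 / 128 := by ring
  calc |skew (g⁻¹ * k)| ≤ σ / (128 * ρ ^ 2) * (4 * ρ ^ 2) +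
        (1 / ρ ^ 2 + 1 / ρ ^ 2) * (ρ ^ 2 / 128) := by
        rw [skew_inv_mul]
        refine (abs_add_le _ _).trans ?_
        have := (g • I).im_pos
        have := (k • I).im_pos
        rw [abs_mul, abs_mul, abs_sub_comm, abs_of_pos (by positivity : 0 < (g • I).im + _)]
        gcongr
        exacts [(abs_nonneg _).trans hre, im_smul_I_le hρ hg.1, im_smul_I_le hρ hk.1]
    _ = σ / 32 + 1 / 64 := by field_simp; ring
    _ < 1 / 16 := by linarith

lemma eq_or_eq_neg_of_close (hσ : 0 < σ) (hσ₁ : σ ≤ 1)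
    (hsys : ∀ h ∈ Γ, 2 < |h.1.trace| → σ ^ 2 ≤ frobSq h - 2)
    (hell : ∀ h ∈ Γ, |h.1.trace| ≤ 2 → |skew h| < 1 / 16 → skew h = 0)
    (hρ : 0 < ρ) {g k : SL(2, ℝ)} (hgΓ : g ∈ Γ) (hkΓ : k ∈ Γ)
    (hg : ρ ^ 2 ≤ g 1 0 ^ 2 + g 1 1 ^ 2 ∧ g 1 0 ^ 2 + g 1 1 ^ 2 ≤ (2 * ρ) ^ 2)
    (hk : ρ ^ 2 ≤ k 1 0 ^ 2 + k 1 1 ^ 2 ∧ k 1 0 ^ 2 + k 1 1 ^ 2 ≤ (2 * ρ) ^ 2)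
    (hre : |(g • I).re - (k • I).re| ≤ σ / (128 * ρ ^ 2))
    (him : |(g • I).im - (k • I).im| ≤ σ / (128 * ρ ^ 2))
    (h10 : |g 1 0 - k 1 0| ≤ ρ / 512) (h11 : |g 1 1 - k 1 1| ≤ ρ / 512) :
    k = g ∨ k = -g := by
  have hmem : g⁻¹ * k ∈ Γ := Γ.mul_mem (Γ.inv_mem hgΓ) hkΓ
  have frob : frobSq (g⁻¹ * k) - 2 < σ ^ 2 :=
    calc frobSq (g⁻¹ * k) - 2
        ≤ ((σ / (128 * ρ ^ 2)) ^ 2 + (σ / (128 * ρ ^ 2)) ^ 2) * ((2 * ρ) ^ 2 * (2 * ρ) ^ 2) := by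
          rw [frobSq_inv_mul, add_sub_cancel_left, ← sq_abs (_ - _), ← sq_abs (_ - (k • I).im)]
          gcongr
          exacts [hg.2, hk.2]
      _ = σ ^ 2 / 512 := by field_simp; ring
      _ < σ ^ 2 := by linarith [pow_pos hσ 2]
  have htr : |(g⁻¹ * k).1.trace| ≤ 2 := not_lt.1 fun h ↦ (hsys _ hmem h).not_gt frob
  exact eq_or_eq_neg_of_inv_mul <| eq_one_or_eq_neg_one_of_skew_eq_zero htr <|
    hell _ hmem htr <| abs_skew_inv_mul_lt hσ₁ hρ hg hk hre h10 h11

lemma card_block_le_of_no_small_rotation (hσ : 0 < σ) (hσ₁ : σ ≤ 1)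
    (hsys : ∀ h ∈ Γ, 2 < |h.1.trace| → σ ^ 2 ≤ frobSq h - 2)
    (hell : ∀ h ∈ Γ, |h.1.trace| ≤ 2 → |skew h| < 1 / 16 → skew h = 0)
    (hR : 0 ≤ R) (hρ : 0 < ρ) (hs : ∀ g ∈ s, g ∈ Γ ∧ frobSq g ≤ R ^ 2)
    (hblock : ∀ g ∈ s, ρ ^ 2 ≤ g 1 0 ^ 2 + g 1 1 ^ 2 ∧ g 1 0 ^ 2 + g 1 1 ^ 2 ≤ (2 * ρ) ^ 2) :
    (#s : ℝ) ≤ 2 ^ 43 * R / σ ^ 2 * ρ := by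
  rcases s.eq_empty_or_nonempty with rfl | ⟨g₀, hg₀⟩
  · simp only [card_empty, Nat.cast_zero]
    positivity
  have hRρ : 1 ≤ R * (2 * ρ) :=
    one_le_mul_of_frobSq_le hR (by positivity) (hs g₀ hg₀).2 (hblock g₀ hg₀).2
  let r : Fin 4 → ℝ := ![R / ρ, 1 / ρ ^ 2, 2 * ρ, 2 * ρ]
  let ε : Fin 4 → ℝ := ![σ / (128 * ρ ^ 2), σ / (128 * ρ ^ 2), ρ / 512, ρ / 512]
  have hbox := card_le_of_box (s := s) (f := fun g ↦ ![(g • I).re, (g • I).im, g 1 0, g 1 1])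
    (r := r) (ε := ε) (B := 2) ?_ ?_ ?_ ?_
  · convert hbox using 1
    simp only [Fin.prod_univ_four, r, ε, Matrix.cons_val]
    field_simp
    ring
  · have hpos : 0 < σ / (128 * ρ ^ 2) := by positivity
    have hrow : 0 < ρ / 512 := by positivity
    exact Fin.forall_fin_succ.2
      ⟨hpos, Fin.forall_fin_succ.2 ⟨hpos, Fin.forall_fin_two.2 ⟨hrow, hrow⟩⟩⟩
  · have hre : σ / (128 * ρ ^ 2) ≤ R / ρ := by
      rw [div_le_div_iff₀ (by positivity) hρ]
      nlinarith
    have him : σ / (128 * ρ ^ 2) ≤ 1 / ρ ^ 2 := by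
      rw [div_le_div_iff₀ (by positivity) (by positivity)]
      nlinarith [pow_pos hρ 2]
    simpa [Fin.forall_fin_succ, ε, r] using ⟨hre, by simpa using him, by linarith⟩
  · intro g hg
    have row := abs_apply_one_le (by positivity) (hblock g hg).2
    have him : |(g • I).im| ≤ 1 / ρ ^ 2 :=
      (abs_of_pos (g • I).im_pos).trans_le (im_smul_I_le hρ (hblock g hg).1)
    simpa [Fin.forall_fin_succ, r] using ⟨abs_re_smul_I_le hR hρ (hs g hg).2 (hblock g hg).1,
      by simpa using him, row 0, row 1⟩
  · intro t ht hclose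
    exact_mod_cast card_le_two_of_eq_or_eq_neg fun g hg k hk ↦ by
      obtain ⟨hre, him, h10, h11⟩ := by
        simpa [Fin.forall_fin_succ, ε] using hclose g hg k hk
      exact eq_or_eq_neg_of_close hσ hσ₁ hsys hell hρ (hs g (ht hg)).1 (hs k (ht hk)).1
        (hblock g (ht hg)) (hblock k (ht hk)) hre.le him.le h10.le h11.le

lemma card_le_of_no_small_rotation (hσ : 0 < σ) (hσ₁ : σ ≤ 1)
    (hsys : ∀ h ∈ Γ, 2 < |h.1.trace| → σ ^ 2 ≤ frobSq h - 2)
    (hell : ∀ h ∈ Γ, |h.1.trace| ≤ 2 → |skew h| < 1 / 16 → skew h = 0)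
    (hR : 0 ≤ R) (hs : ∀ g ∈ s, g ∈ Γ ∧ frobSq g ≤ R ^ 2) :
    (#s : ℝ) ≤ 2 ^ 43 * R ^ 2 / σ ^ 2 := by
  have hdyadic := card_le_of_dyadic (s := s) (f := fun g ↦ √(g 1 0 ^ 2 + g 1 1 ^ 2))
    (B := 2 ^ 43 * R / σ ^ 2) hR ?_ ?_ ?_
  · exact hdyadic.trans_eq (by ring)
  · exact fun g _ ↦ Real.sqrt_pos.2 <| pos_of_mul_pos_right
      ((im_smul_I_mul g).symm ▸ one_pos) (g • I).im_pos.le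
  · intro g hg
    refine Real.sqrt_le_iff.2 ⟨hR, le_trans ?_ (hs g hg).2⟩
    rw [frobSq]
    linarith [sq_nonneg (g 0 0), sq_nonneg (g 0 1)]
  · intro t ht ρ hρ hblock
    exact card_block_le_of_no_small_rotation hσ hσ₁ hsys hell hR hρ
      (fun g hg ↦ hs g (ht hg)) fun g hg ↦
        ⟨(Real.le_sqrt' hρ).1 (hblock g hg).1,
          (Real.sqrt_le_left (by positivity)).1 (hblock g hg).2⟩

end NoSmallRotations

section SmallRotation

/-- The Gram matrix `g * diag(1, κ) * gᵀ` of the rows of `g` for the quadratic form `x² + κ y²`. -/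
def gram (κ : ℝ) (g : SL(2, ℝ)) (i j : Fin 2) : ℝ := g i 0 * g j 0 + κ * (g i 1 * g j 1)

/-- The trace of `gram κ g`. -/
def gramTrace (κ : ℝ) (g : SL(2, ℝ)) : ℝ := gram κ g 0 0 + gram κ g 1 1

/-- `g` has the form `(x y; -κy x)`. For `κ > 0` these are the elements of a group of rotations
about a common fixed point, for `κ = 0` they are `±` horizontal translations. -/
def InTorus (κ : ℝ) (g : SL(2, ℝ)) : Prop := g 0 0 = g 1 1 ∧ g 1 0 = -(κ * g 0 1)

/-- How far `g` is from commuting with the elements `u` of `InTorus κ`: the commutator of `g` and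
`u` has trace `2 + (u 0 1)² * defect κ g`. -/
def defect (κ : ℝ) (g : SL(2, ℝ)) : ℝ := κ * (g 0 0 - g 1 1) ^ 2 + (g 1 0 + κ * g 0 1) ^ 2

variable {κ : ℝ} {g k u v : SL(2, ℝ)}

lemma gram_mul_sub_sq (κ : ℝ) (g : SL(2, ℝ)) :
    gram κ g 0 0 * gram κ g 1 1 - gram κ g 0 1 ^ 2 = κ := by
  unfold gram
  linear_combination κ * (g 0 0 * g 1 1 - g 0 1 * g 1 0 + 1) * det_eq_one g

lemma gram_self_nonneg (hκ : 0 ≤ κ) (g : SL(2, ℝ)) (i : Fin 2) : 0 ≤ gram κ g i i :=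
  add_nonneg (mul_self_nonneg _) (mul_nonneg hκ (mul_self_nonneg _))

lemma gramTrace_nonneg (hκ : 0 ≤ κ) (g : SL(2, ℝ)) : 0 ≤ gramTrace κ g :=
  add_nonneg (gram_self_nonneg hκ g 0) (gram_self_nonneg hκ g 1)

lemma defect_eq_gram (κ : ℝ) (g : SL(2, ℝ)) :
    defect κ g = κ * gram κ g 0 0 + gram κ g 1 1 - 2 * κ := by
  unfold defect gram
  linear_combination (-2 * κ) * det_eq_one g

lemma defect_nonneg (hκ : 0 ≤ κ) (g : SL(2, ℝ)) : 0 ≤ defect κ g := by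
  unfold defect
  positivity

lemma InTorus.sq_add_mul_sq (hu : InTorus κ u) : u 1 1 ^ 2 + κ * u 0 1 ^ 2 = 1 := by
  have := det_eq_one u
  rw [hu.1, hu.2] at this
  linarith

lemma InTorus.conj_apply_zero (hu : InTorus κ u) (v : SL(2, ℝ)) :
    (v * u * v⁻¹) 0 0 = u 1 1 - u 0 1 * gram κ v 0 1 ∧
      (v * u * v⁻¹) 0 1 = u 0 1 * gram κ v 0 0 := by
  rw [mul_inv_apply_zero, mul_inv_apply_one, mul_apply, mul_apply, hu.1, hu.2, gram, gram]
  constructor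
  · linear_combination u 1 1 * det_eq_one v
  · ring

lemma InTorus.conj_apply_one (hu : InTorus κ u) (v : SL(2, ℝ)) :
    (v * u * v⁻¹) 1 0 = -(u 0 1 * gram κ v 1 1) ∧
      (v * u * v⁻¹) 1 1 = u 1 1 + u 0 1 * gram κ v 0 1 := by
  rw [mul_inv_apply_zero, mul_inv_apply_one, mul_apply, mul_apply, hu.1, hu.2, gram, gram]
  constructor
  · ring
  · linear_combination u 1 1 * det_eq_one v

lemma InTorus.defect_conj (hu : InTorus κ u) (v : SL(2, ℝ)) :
    defect κ (v * u * v⁻¹) = u 0 1 ^ 2 * (defect κ v * (defect κ v + 4 * κ)) := by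
  obtain ⟨h00, h01⟩ := hu.conj_apply_zero v
  obtain ⟨h10, h11⟩ := hu.conj_apply_one v
  rw [defect_eq_gram κ v, defect, h00, h01, h10, h11]
  linear_combination (-4 * κ * u 0 1 ^ 2) * gram_mul_sub_sq κ v

lemma InTorus.frobSq_conj_le (hu : InTorus κ u) (hκ : 0 ≤ κ) (v : SL(2, ℝ)) :
    frobSq (v * u * v⁻¹) ≤ 2 + u 0 1 ^ 2 * gramTrace κ v ^ 2 := by
  obtain ⟨h00, h01⟩ := hu.conj_apply_zero v
  obtain ⟨h10, h11⟩ := hu.conj_apply_one v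
  have : frobSq (v * u * v⁻¹) =
      2 + u 0 1 ^ 2 * gramTrace κ v ^ 2 - 4 * (κ * u 0 1 ^ 2) := by
    rw [frobSq, gramTrace, h00, h01, h10, h11]
    linear_combination (-2 * u 0 1 ^ 2) * gram_mul_sub_sq κ v + 2 * hu.sq_add_mul_sq
  have : 0 ≤ κ * u 0 1 ^ 2 := by positivity
  linarith

lemma InTorus.gramTrace_conj_le (hu : InTorus κ u) (hκ : 0 ≤ κ) (v : SL(2, ℝ)) :
    gramTrace κ (v * u * v⁻¹) ≤
      2 * (1 + κ) + 2 * (u 0 1 ^ 2 * defect κ v + 2 * (κ * u 0 1 ^ 2)) * gramTrace κ v := by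
  obtain ⟨h00, h01⟩ := hu.conj_apply_zero v
  obtain ⟨h10, h11⟩ := hu.conj_apply_one v
  have hdiff : 2 * (1 + κ) + 2 * (u 0 1 ^ 2 * defect κ v + 2 * (κ * u 0 1 ^ 2)) * gramTrace κ v -
      gramTrace κ (v * u * v⁻¹) = 4 * (1 + κ) * (κ * u 0 1 ^ 2) +
        u 0 1 ^ 2 * (κ * gram κ v 0 0 ^ 2 + gram κ v 1 1 ^ 2) +
        (u 1 1 + u 0 1 * gram κ v 0 1) ^ 2 + κ * (u 1 1 - u 0 1 * gram κ v 0 1) ^ 2 := by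
    rw [gramTrace, gramTrace, gram.eq_def κ (v * u * v⁻¹), gram.eq_def κ (v * u * v⁻¹), h00, h01,
      h10, h11, defect_eq_gram]
    linear_combination 2 * u 0 1 ^ 2 * (1 + κ) * gram_mul_sub_sq κ v -
      2 * (1 + κ) * hu.sq_add_mul_sq
  have : 0 ≤ 4 * (1 + κ) * (κ * u 0 1 ^ 2) +
      u 0 1 ^ 2 * (κ * gram κ v 0 0 ^ 2 + gram κ v 1 1 ^ 2) +
        (u 1 1 + u 0 1 * gram κ v 0 1) ^ 2 + κ * (u 1 1 - u 0 1 * gram κ v 0 1) ^ 2 := by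
    positivity
  linarith

/-- `u` lies in `Γ ∩ InTorus κ`, is close to `±1`, and has the smallest nonzero upper right entry
among the elements of `Γ ∩ InTorus κ`. The bounds `0 ≤ κ ≤ 1` normalise the position of the fixed
point of `u`. -/
structure IsMinimalRotation (Γ : Subgroup SL(2, ℝ)) (κ : ℝ) (u : SL(2, ℝ)) : Prop where
  mem : u ∈ Γ
  inTorus : InTorus κ u
  pos : 0 < u 0 1
  lt : u 0 1 < 1 / 16
  nonneg : 0 ≤ κ
  le_one : κ ≤ 1
  le_abs : ∀ h ∈ Γ, InTorus κ h → h 0 1 ≠ 0 → u 0 1 ≤ |h 0 1|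

variable {Γ : Subgroup SL(2, ℝ)}

namespace IsMinimalRotation

lemma mul_sq_le (H : IsMinimalRotation Γ κ u) : κ * u 0 1 ^ 2 ≤ 1 / 256 :=
  calc κ * u 0 1 ^ 2 ≤ 1 * (1 / 16) ^ 2 := by
        have := H.pos
        gcongr
        exacts [H.le_one, H.lt.le]
    _ = 1 / 256 := by norm_num

lemma defect_conj_lt (H : IsMinimalRotation Γ κ u) (hv : u 0 1 ^ 2 * defect κ v < 1 / 4)
    (hv₀ : 0 < defect κ v) : defect κ (v * u * v⁻¹) < defect κ v := by
  rw [H.inTorus.defect_conj]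
  nlinarith [H.mul_sq_le]

lemma gramTrace_conj_le (H : IsMinimalRotation Γ κ u) {K : ℝ} (hK : 16 ≤ K)
    (hv : u 0 1 ^ 2 * defect κ v < 1 / 4) (hvK : gramTrace κ v ≤ K) :
    gramTrace κ (v * u * v⁻¹) ≤ K := by
  have hT := gramTrace_nonneg H.nonneg v
  have := H.inTorus.gramTrace_conj_le H.nonneg v
  nlinarith [H.mul_sq_le, H.le_one, mul_nonneg H.nonneg (sq_nonneg (u 0 1))]

/-- The sequence `v, v u v⁻¹, …` of Jørgensen's inequality stays in a bounded subset of `Γ`, while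
its defect is strictly decreasing as long as it is nonzero. -/
lemma defect_eq_zero (H : IsMinimalRotation Γ κ u)
    (hfin : ∀ r, {g | g ∈ Γ ∧ frobSq g ≤ r}.Finite) (hvΓ : v ∈ Γ)
    (hv : u 0 1 ^ 2 * defect κ v < 1 / 4) : defect κ v = 0 := by
  by_contra hne
  let w (n : ℕ) : SL(2, ℝ) := (fun x ↦ x * u * x⁻¹)^[n] v
  let K := max 16 (gramTrace κ v)
  have w_succ (n : ℕ) : w (n + 1) = w n * u * (w n)⁻¹ := Function.iterate_succ_apply' _ _ _
  have hw (n : ℕ) : w n ∈ Γ ∧ 0 < defect κ (w n) ∧ u 0 1 ^ 2 * defect κ (w n) < 1 / 4 ∧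
      gramTrace κ (w n) ≤ K := by
    induction n with
    | zero => exact ⟨hvΓ, (defect_nonneg H.nonneg v).lt_of_ne' hne, hv, le_max_right _ _⟩
    | succ n ih =>
      obtain ⟨hΓ, hpos, hlt, hK⟩ := ih
      rw [w_succ]
      refine ⟨Γ.mul_mem (Γ.mul_mem hΓ H.mem) (Γ.inv_mem hΓ), ?_, ?_,
        H.gramTrace_conj_le (le_max_left _ _) hlt hK⟩
      · rw [H.inTorus.defect_conj]
        have := H.pos
        have := H.nonneg
        positivity
      · refine lt_of_le_of_lt ?_ hlt
        gcongr
        exact (H.defect_conj_lt hlt hpos).le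
  have anti : StrictAnti fun n ↦ defect κ (w n) := strictAnti_nat_of_succ_lt fun n ↦ by
    simpa only [w_succ] using H.defect_conj_lt (hw n).2.2.1 (hw n).2.1
  have inj : Function.Injective fun n ↦ w (n + 1) := fun m n h ↦ by
    simpa using anti.injective (congrArg (defect κ) h : defect κ (w (m + 1)) = defect κ (w (n + 1)))
  refine Set.infinite_range_of_injective inj ((hfin (2 + u 0 1 ^ 2 * K ^ 2)).subset ?_)
  rintro _ ⟨n, rfl⟩
  refine ⟨(hw _).1, ?_⟩
  have hT := gramTrace_nonneg H.nonneg (w n)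
  dsimp only
  rw [w_succ]
  refine (H.inTorus.frobSq_conj_le H.nonneg _).trans ?_
  gcongr
  exact (hw n).2.2.2

lemma one_le_sq_of_lower_left_eq_zero (H : IsMinimalRotation Γ 0 u) (hvΓ : v ∈ Γ)
    (hv : v 1 0 = 0) : 1 ≤ v 0 0 ^ 2 := by
  obtain ⟨h00, h01⟩ := H.inTorus.conj_apply_zero v
  obtain ⟨h10, h11⟩ := H.inTorus.conj_apply_one v
  simp only [gram, hv, mul_zero, zero_mul, add_zero, neg_zero, sub_zero] at h00 h01 h10 h11
  have hu := H.pos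
  have hv₀ : v 0 0 ≠ 0 := fun h ↦ by simpa [h, hv] using det_eq_one v
  have hle := H.le_abs _ (Γ.mul_mem (Γ.mul_mem hvΓ H.mem) (Γ.inv_mem hvΓ))
    ⟨h00.trans h11.symm, by simp [h10]⟩ (by rw [h01]; positivity)
  rw [h01, ← sq, abs_of_nonneg (by positivity)] at hle
  exact (le_mul_iff_one_le_right hu).1 hle

lemma inTorus_of_defect_eq_zero (H : IsMinimalRotation Γ κ u) (hvΓ : v ∈ Γ)
    (hv : defect κ v = 0) : InTorus κ v := by
  have hdiag : κ * (v 0 0 - v 1 1) ^ 2 = 0 := by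
    have := mul_nonneg H.nonneg (sq_nonneg (v 0 0 - v 1 1))
    unfold defect at hv
    nlinarith
  have hanti : v 1 0 + κ * v 0 1 = 0 := by
    unfold defect at hv
    nlinarith
  refine ⟨?_, by linarith⟩
  rcases mul_eq_zero.1 hdiag with rfl | hdiag
  · have h10 : v 1 0 = 0 := by simpa using hanti
    have h00 := H.one_le_sq_of_lower_left_eq_zero hvΓ h10
    have h11 : 1 ≤ v 1 1 ^ 2 := by
      simpa [Matrix.adjugate_fin_two] using
        H.one_le_sq_of_lower_left_eq_zero (Γ.inv_mem hvΓ) (by simp [Matrix.adjugate_fin_two, h10])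
    have hdet : v 0 0 * v 1 1 = 1 := by simpa [h10] using det_eq_one v
    nlinarith
  · exact sub_eq_zero.1 (pow_eq_zero_iff two_ne_zero |>.1 hdiag)

lemma inTorus_of_defect_lt (H : IsMinimalRotation Γ κ u)
    (hfin : ∀ r, {g | g ∈ Γ ∧ frobSq g ≤ r}.Finite) (hvΓ : v ∈ Γ)
    (hv : u 0 1 ^ 2 * defect κ v < 1 / 4) : InTorus κ v :=
  H.inTorus_of_defect_eq_zero hvΓ (H.defect_eq_zero hfin hvΓ hv)

end IsMinimalRotation

end SmallRotation

section TorusCosets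

variable {κ r τ ρ R : ℝ} {g k u w : SL(2, ℝ)} {Γ : Subgroup SL(2, ℝ)} {s : Finset SL(2, ℝ)}

/-- The half-angle parameter `tan (θ / 2)` of the point `± (x, y) = (cos θ, sin θ)`, where the sign
is chosen such that `cos θ ≥ 0`. -/
noncomputable def halfTan (x y : ℝ) : ℝ := y / (x + if 0 ≤ x then 1 else -1)

lemma exists_halfTan_eq_div (x y : ℝ) :
    ∃ e : ℝ, e ^ 2 = 1 ∧ 1 ≤ |x + e| ∧ halfTan x y = y / (x + e) := by
  refine ⟨_, ?_, ?_, rfl⟩ <;> split_ifs with hx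
  · norm_num
  · norm_num
  · rw [abs_of_pos (by linarith)]
    linarith
  · rw [abs_of_neg (by linarith)]
    linarith

lemma abs_halfTan_le (x y : ℝ) : |halfTan x y| ≤ |y| := by
  obtain ⟨e, -, he, h⟩ := exists_halfTan_eq_div x y
  rw [h, abs_div]
  exact div_le_self (abs_nonneg y) he

lemma abs_mul_sub_mul_le_halfTan (hκ : 0 ≤ κ) {x y x' y' : ℝ} (h : x ^ 2 + κ * y ^ 2 = 1)
    (h' : x' ^ 2 + κ * y' ^ 2 = 1) :
    |x * y' - y * x'| ≤ 2 * |halfTan x y - halfTan x' y'| := by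
  obtain ⟨e, he, hX, heq⟩ := exists_halfTan_eq_div x y
  obtain ⟨e', he', hX', heq'⟩ := exists_halfTan_eq_div x' y'
  have hX₀ : x + e ≠ 0 := abs_pos.1 (one_pos.trans_le hX)
  have hX₀' : x' + e' ≠ 0 := abs_pos.1 (one_pos.trans_le hX')
  have key : x * y' - y * x' =
      (y' / (x' + e') - y / (x + e)) * (((x + e) * (x' + e') + κ * (y * y')) / 2) := by
    field_simp
    linear_combination y * (x + e) * (he' - h') - y' * (x' + e') * (he - h)
  have coeff : |((x + e) * (x' + e') + κ * (y * y')) / 2| ≤ 2 := by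
    have hκyy : κ * (y - y') ^ 2 ≥ 0 ∧ κ * (y + y') ^ 2 ≥ 0 := ⟨by positivity, by positivity⟩
    rw [abs_le]
    constructor <;>
      nlinarith [sq_nonneg (x - x'), sq_nonneg (x + x'), sq_nonneg (e - e'), sq_nonneg (e + e'),
        sq_nonneg (x - e'), sq_nonneg (x + e'), sq_nonneg (e - x'), sq_nonneg (e + x'),
        mul_nonneg hκ (sq_nonneg y), mul_nonneg hκ (sq_nonneg y')]
  rw [key, heq, heq', abs_mul, abs_sub_comm, mul_comm]
  gcongr

lemma InTorus.sq_apply_one_one_le (hκ : 0 ≤ κ) (hu : InTorus κ u) : u 1 1 ^ 2 ≤ 1 := by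
  have := hu.sq_add_mul_sq
  have : 0 ≤ κ * u 0 1 ^ 2 := by positivity
  linarith

lemma InTorus.abs_trace_le_two (hκ : 0 ≤ κ) (hu : InTorus κ u) : |u.1.trace| ≤ 2 := by
  have := abs_le_one_iff_mul_self_le_one.2 ((sq (u 1 1)).symm.trans_le (hu.sq_apply_one_one_le hκ))
  rw [Matrix.trace_fin_two, hu.1, ← two_mul, abs_mul, abs_two]
  linarith

lemma InTorus.inv_mul (hg : InTorus κ g) (hk : InTorus κ k) : InTorus κ (g⁻¹ * k) := by
  constructor <;> rw [inv_mul_apply_zero, inv_mul_apply_one, hg.1, hg.2, hk.1, hk.2] <;> ring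

lemma InTorus.sq_mul_gramTrace_le (hκ : 0 ≤ κ) (hw : InTorus κ w) (hg : frobSq g ≤ r)
    (hgw : frobSq (g * w) ≤ r) : w 0 1 ^ 2 * gramTrace κ g ≤ 5 * r := by
  have hx := hw.sq_apply_one_one_le hκ
  have hy : κ * w 0 1 ^ 2 ≤ 1 := by linarith [hw.sq_add_mul_sq, sq_nonneg (w 1 1)]
  have col : g 0 1 ^ 2 + g 1 1 ^ 2 ≤ r := by
    rw [frobSq] at hg
    linarith [sq_nonneg (g 0 0), sq_nonneg (g 1 0)]
  have colw : (g * w) 0 1 ^ 2 + (g * w) 1 1 ^ 2 ≤ r := by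
    rw [frobSq] at hgw
    linarith [sq_nonneg ((g * w) 0 0), sq_nonneg ((g * w) 1 0)]
  rw [mul_apply, mul_apply] at colw
  calc w 0 1 ^ 2 * gramTrace κ g
      = (g 0 0 * w 0 1) ^ 2 + (g 1 0 * w 0 1) ^ 2 +
          κ * w 0 1 ^ 2 * (g 0 1 ^ 2 + g 1 1 ^ 2) := by
        rw [gramTrace, gram, gram]
        ring
    _ ≤ 2 * ((g 0 0 * w 0 1 + g 0 1 * w 1 1) ^ 2 + (g 1 0 * w 0 1 + g 1 1 * w 1 1) ^ 2) +
          2 * (w 1 1 ^ 2 * (g 0 1 ^ 2 + g 1 1 ^ 2)) +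
          κ * w 0 1 ^ 2 * (g 0 1 ^ 2 + g 1 1 ^ 2) := by
        nlinarith [sq_nonneg (g 0 0 * w 0 1 + 2 * (g 0 1 * w 1 1)),
          sq_nonneg (g 1 0 * w 0 1 + 2 * (g 1 1 * w 1 1))]
    _ ≤ 2 * r + 2 * (1 * r) + 1 * r := by gcongr
    _ = 5 * r := by ring

namespace IsMinimalRotation

lemma card_torus_le (H : IsMinimalRotation Γ κ u) (hτ : u 0 1 ≤ τ)
    (hs : ∀ g ∈ s, g ∈ Γ ∧ InTorus κ g ∧ |g 0 1| ≤ τ) : (#s : ℝ) ≤ 16 * (τ / u 0 1) := by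
  have hδ := H.pos
  refine (card_le_of_interval (f := fun g ↦ halfTan (g 1 1) (g 0 1)) (ε := u 0 1 / 2) (B := 2)
    (half_pos hδ) (by linarith) (fun g hg ↦ (abs_halfTan_le _ _).trans (hs g hg).2.2)
    fun t ht hclose ↦ ?_).trans_eq (by field_simp; ring)
  refine mod_cast card_le_two_of_eq_or_eq_neg fun g hg k hk ↦ eq_or_eq_neg_of_inv_mul ?_
  obtain ⟨hgΓ, hgT, -⟩ := hs g (ht hg)
  obtain ⟨hkΓ, hkT, -⟩ := hs k (ht hk)
  have h01 : (g⁻¹ * k) 0 1 = 0 := by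
    by_contra hne
    refine (H.le_abs _ (Γ.mul_mem (Γ.inv_mem hgΓ) hkΓ) (hgT.inv_mul hkT) hne).not_gt ?_
    rw [inv_mul_apply_zero]
    linarith [abs_mul_sub_mul_le_halfTan H.nonneg hgT.sq_add_mul_sq hkT.sq_add_mul_sq,
      hclose g hg k hk]
  obtain ⟨hdiag, hanti⟩ := hgT.inv_mul hkT
  exact eq_one_or_eq_neg_one hdiag h01 (by rw [hanti, h01, mul_zero, neg_zero])

lemma card_torus_coset_le (H : IsMinimalRotation Γ κ u) (hρ : 0 < ρ) (hρR : ρ ≤ R)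
    (hs : ∀ g ∈ s, g ∈ Γ ∧ frobSq g ≤ R ^ 2 ∧ ρ ^ 2 ≤ gramTrace κ g)
    (hcoset : ∀ g ∈ s, ∀ k ∈ s, InTorus κ (g⁻¹ * k)) : (#s : ℝ) ≤ 48 * (R / (ρ * u 0 1)) := by
  classical
  have hδ := H.pos
  have hR : 0 < R := hρ.trans_le hρR
  rcases s.eq_empty_or_nonempty with rfl | ⟨g, hg⟩
  · simp only [card_empty, Nat.cast_zero]
    positivity
  obtain ⟨hgΓ, hgR, hgρ⟩ := hs g hg
  have hτ : u 0 1 ≤ 3 * R / ρ := by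
    rw [le_div_iff₀ hρ]
    nlinarith [H.lt]
  have hcard := H.card_torus_le hτ (s := s.image (g⁻¹ * ·)) <| forall_mem_image.2 fun k hk ↦ by
    obtain ⟨hkΓ, hkR, -⟩ := hs k hk
    refine ⟨Γ.mul_mem (Γ.inv_mem hgΓ) hkΓ, hcoset g hg k hk, abs_le_of_sq_le_sq ?_ (by positivity)⟩
    rw [div_pow, le_div_iff₀ (by positivity)]
    calc (g⁻¹ * k) 0 1 ^ 2 * ρ ^ 2 ≤ (g⁻¹ * k) 0 1 ^ 2 * gramTrace κ g := by gcongr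
      _ ≤ 5 * R ^ 2 := (hcoset g hg k hk).sq_mul_gramTrace_le H.nonneg hgR (by simpa using hkR)
      _ ≤ (3 * R) ^ 2 := by nlinarith
  rw [card_image_of_injective _ (mul_right_injective g⁻¹)] at hcard
  refine hcard.trans_eq ?_
  field_simp
  norm_num

end IsMinimalRotation

/-- The traceless part of the symmetric matrix `gram κ g`, as a complex number. Its argument is
twice the direction of the eigenvectors of `gram κ g`. -/
noncomputable def gramVec (κ : ℝ) (g : SL(2, ℝ)) : ℂ :=
  ⟨(gram κ g 0 0 - gram κ g 1 1) / 2, gram κ g 0 1⟩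

lemma norm_gramVec_sq (κ : ℝ) (g : SL(2, ℝ)) :
    ‖gramVec κ g‖ ^ 2 = (gramTrace κ g / 2) ^ 2 - κ := by
  rw [Complex.sq_norm, gramVec, Complex.normSq_mk, gramTrace]
  linear_combination -gram_mul_sub_sq κ g

lemma defect_inv_mul (κ : ℝ) (g k : SL(2, ℝ)) : defect κ (g⁻¹ * k) =
    2 * (gramTrace κ g / 2 * (gramTrace κ k / 2) - ‖gramVec κ g‖ * ‖gramVec κ k‖ *
      Real.cos ((gramVec κ g).arg - (gramVec κ k).arg) - κ) := by
  have hcos : ‖gramVec κ g‖ * ‖gramVec κ k‖ * Real.cos ((gramVec κ g).arg - (gramVec κ k).arg) =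
      (gramVec κ g).re * (gramVec κ k).re + (gramVec κ g).im * (gramVec κ k).im := by
    rw [Real.cos_sub, ← (gramVec κ g).norm_mul_cos_arg, ← (gramVec κ k).norm_mul_cos_arg,
      ← (gramVec κ g).norm_mul_sin_arg, ← (gramVec κ k).norm_mul_sin_arg]
    ring
  rw [hcos, defect_eq_gram, gram.eq_def κ (g⁻¹ * k), gram.eq_def κ (g⁻¹ * k)]
  simp only [inv_mul_apply_zero, inv_mul_apply_one, gramVec, gramTrace, gram]
  ring

lemma mul_sub_mul_le_of_sq_eq_sub (hκ : 0 ≤ κ) {a b p q : ℝ} (ha : 0 < a) (hb : 0 < b)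
    (hp : 0 ≤ p) (hq : 0 ≤ q) (hpa : p ^ 2 = a ^ 2 - κ) (hqb : q ^ 2 = b ^ 2 - κ)
    (hab : a ≤ 4 * b) (hba : b ≤ 4 * a) : a * b - p * q ≤ 8 * κ := by
  have hpa' : p ≤ a := le_of_sq_le_sq (by linarith) ha.le
  have hqb' : q ≤ b := le_of_sq_le_sq (by linarith) hb.le
  have hle : p * q ≤ a * b := by gcongr
  refine le_of_mul_le_mul_right ?_ (mul_pos ha hb)
  calc (a * b - p * q) * (a * b) ≤ (a * b - p * q) * (a * b + p * q) := by
        have := mul_nonneg (sub_nonneg.2 hle) (mul_nonneg hp hq)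
        linarith
    _ = κ * (a ^ 2 + b ^ 2) - κ ^ 2 := by linear_combination -q ^ 2 * hpa - (a ^ 2 - κ) * hqb
    _ ≤ κ * (a * (4 * b) + b * (4 * a)) := by
        rw [sq a, sq b]
        have : κ * (a * a + b * b) ≤ κ * (a * (4 * b) + b * (4 * a)) := by gcongr
        linarith [sq_nonneg κ]
    _ = 8 * κ * (a * b) := by ring

lemma two_mul_norm_gramVec_le (hκ : 0 ≤ κ) (g : SL(2, ℝ)) : 2 * ‖gramVec κ g‖ ≤ gramTrace κ g := by
  have := norm_gramVec_sq κ g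
  have : ‖gramVec κ g‖ ≤ gramTrace κ g / 2 :=
    le_of_sq_le_sq (by linarith) (by linarith [gramTrace_nonneg hκ g])
  linarith

lemma gramTrace_le_frobSq (hκ₁ : κ ≤ 1) (g : SL(2, ℝ)) : gramTrace κ g ≤ frobSq g := by
  rw [gramTrace, gram, gram, frobSq]
  nlinarith [sq_nonneg (g 0 1), sq_nonneg (g 1 1)]

namespace IsMinimalRotation

lemma sq_mul_defect_inv_mul_lt (H : IsMinimalRotation Γ κ u) (hρ : 0 < ρ)
    (hg : ρ ^ 2 ≤ gramTrace κ g ∧ gramTrace κ g ≤ (2 * ρ) ^ 2)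
    (hk : ρ ^ 2 ≤ gramTrace κ k ∧ gramTrace κ k ≤ (2 * ρ) ^ 2)
    (harg : |(gramVec κ g).arg - (gramVec κ k).arg| ≤ 1 / (8 * u 0 1 * ρ ^ 2)) :
    u 0 1 ^ 2 * defect κ (g⁻¹ * k) < 1 / 4 := by
  have hδ := H.pos
  have hκ := H.nonneg
  have hρ₂ : 0 < ρ ^ 2 := pow_pos hρ 2
  have hdet := mul_sub_mul_le_of_sq_eq_sub hκ (a := gramTrace κ g / 2) (b := gramTrace κ k / 2)
    (by linarith) (by linarith) (norm_nonneg _) (norm_nonneg _) (norm_gramVec_sq κ g)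
    (norm_gramVec_sq κ k) (by linarith) (by linarith)
  have hnorm : ‖gramVec κ g‖ * ‖gramVec κ k‖ ≤ 2 * ρ ^ 2 * (2 * ρ ^ 2) := by
    gcongr
    · linarith [two_mul_norm_gramVec_le hκ g]
    · linarith [two_mul_norm_gramVec_le hκ k]
  have hcos := mul_le_mul_of_nonneg_left
    (Real.one_sub_sq_div_two_le_cos (x := (gramVec κ g).arg - (gramVec κ k).arg))
    (mul_nonneg (norm_nonneg (gramVec κ g)) (norm_nonneg (gramVec κ k)))
  have hsin : ‖gramVec κ g‖ * ‖gramVec κ k‖ * |(gramVec κ g).arg - (gramVec κ k).arg| ^ 2 ≤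
      2 * ρ ^ 2 * (2 * ρ ^ 2) * (1 / (8 * u 0 1 * ρ ^ 2)) ^ 2 := by gcongr
  rw [sq_abs] at hsin
  calc u 0 1 ^ 2 * defect κ (g⁻¹ * k)
      ≤ u 0 1 ^ 2 * (16 + 2 * ρ ^ 2 * (2 * ρ ^ 2) * (1 / (8 * u 0 1 * ρ ^ 2)) ^ 2) := by
        rw [defect_inv_mul]
        gcongr
        linarith [H.le_one]
    _ = 16 * u 0 1 ^ 2 + 1 / 16 := by field_simp; ring
    _ < 1 / 4 := by nlinarith [H.lt]

lemma inTorus_inv_mul (H : IsMinimalRotation Γ κ u)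
    (hfin : ∀ r, {g | g ∈ Γ ∧ frobSq g ≤ r}.Finite) (hgΓ : g ∈ Γ) (hkΓ : k ∈ Γ) (hρ : 0 < ρ)
    (hg : ρ ^ 2 ≤ gramTrace κ g ∧ gramTrace κ g ≤ (2 * ρ) ^ 2)
    (hk : ρ ^ 2 ≤ gramTrace κ k ∧ gramTrace κ k ≤ (2 * ρ) ^ 2)
    (harg : |(gramVec κ g).arg - (gramVec κ k).arg| ≤ 1 / (8 * u 0 1 * ρ ^ 2)) :
    InTorus κ (g⁻¹ * k) :=
  H.inTorus_of_defect_lt hfin (Γ.mul_mem (Γ.inv_mem hgΓ) hkΓ)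
    (H.sq_mul_defect_inv_mul_lt hρ hg hk harg)

lemma le_sq_mul_gramTrace (H : IsMinimalRotation Γ κ u)
    (hfin : ∀ r, {g | g ∈ Γ ∧ frobSq g ≤ r}.Finite) (hgΓ : g ∈ Γ) (htr : 2 < |g.1.trace|) :
    1 / 4 ≤ u 0 1 ^ 2 * gramTrace κ g := by
  have hdefect : defect κ g ≤ gramTrace κ g := by
    rw [defect_eq_gram, gramTrace]
    nlinarith [H.nonneg, H.le_one, gram_self_nonneg H.nonneg g 0]
  by_contra! hlt
  refine htr.not_ge (InTorus.abs_trace_le_two H.nonneg (H.inTorus_of_defect_lt hfin hgΓ ?_))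
  exact lt_of_le_of_lt (by gcongr) hlt

lemma card_block_le (H : IsMinimalRotation Γ κ u)
    (hfin : ∀ r, {g | g ∈ Γ ∧ frobSq g ≤ r}.Finite) (hR : 0 ≤ R) (hρ : 0 < ρ)
    (hs : ∀ g ∈ s, g ∈ Γ ∧ 2 < |g.1.trace| ∧ frobSq g ≤ R ^ 2)
    (hblock : ∀ g ∈ s, ρ ^ 2 ≤ gramTrace κ g ∧ gramTrace κ g ≤ (2 * ρ) ^ 2) :
    (#s : ℝ) ≤ 2 ^ 13 * R * ρ := by
  have hδ := H.pos
  rcases s.eq_empty_or_nonempty with rfl | ⟨g₀, hg₀⟩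
  · simp only [card_empty, Nat.cast_zero]
    positivity
  obtain ⟨hg₀Γ, hg₀tr, hg₀R⟩ := hs g₀ hg₀
  have hρR : ρ ≤ R := le_of_sq_le_sq
    ((hblock g₀ hg₀).1.trans ((gramTrace_le_frobSq H.le_one g₀).trans hg₀R)) hR
  have hδρ : 1 ≤ u 0 1 * ρ ^ 2 := by
    have : 1 / 4 ≤ u 0 1 ^ 2 * (2 * ρ) ^ 2 :=
      (H.le_sq_mul_gramTrace hfin hg₀Γ hg₀tr).trans (by gcongr; exact (hblock g₀ hg₀).2)
    nlinarith [H.lt, mul_pos hδ (pow_pos hρ 2)]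
  have hcard := card_le_of_interval (s := s) (f := fun g ↦ (gramVec κ g).arg) (r := Real.pi)
    (ε := 1 / (8 * u 0 1 * ρ ^ 2)) (B := 48 * (R / (ρ * u 0 1))) (by positivity) ?_
    (fun g _ ↦ Complex.abs_arg_le_pi _) fun t ht hclose ↦ ?_
  · calc (#s : ℝ) ≤ 4 * (Real.pi / (1 / (8 * u 0 1 * ρ ^ 2))) * (48 * (R / (ρ * u 0 1))) := hcard
      _ = Real.pi * (1536 * R * ρ) := by field_simp; ring
      _ ≤ 4 * (1536 * R * ρ) := by
        gcongr
        exact Real.pi_le_four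
      _ ≤ 2 ^ 13 * R * ρ := by nlinarith [mul_nonneg hR hρ.le]
  · rw [div_le_iff₀ (by positivity)]
    nlinarith [Real.pi_gt_three]
  · exact H.card_torus_coset_le hρ hρR
      (fun g hg ↦ ⟨(hs g (ht hg)).1, (hs g (ht hg)).2.2, (hblock g (ht hg)).1⟩)
      fun g hg k hk ↦ H.inTorus_inv_mul hfin (hs g (ht hg)).1 (hs k (ht hk)).1 hρ
        (hblock g (ht hg)) (hblock k (ht hk)) (hclose g hg k hk).le

lemma card_le (H : IsMinimalRotation Γ κ u)
    (hfin : ∀ r, {g | g ∈ Γ ∧ frobSq g ≤ r}.Finite) (hR : 0 ≤ R)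
    (hs : ∀ g ∈ s, g ∈ Γ ∧ 2 < |g.1.trace| ∧ frobSq g ≤ R ^ 2) :
    (#s : ℝ) ≤ 2 ^ 13 * R ^ 2 := by
  have hdyadic := card_le_of_dyadic (s := s) (f := fun g ↦ √(gramTrace κ g)) (B := 2 ^ 13 * R)
    hR ?_ ?_ ?_
  · exact hdyadic.trans_eq (by ring)
  · intro g hg
    have := H.le_sq_mul_gramTrace hfin (hs g hg).1 (hs g hg).2.1
    exact Real.sqrt_pos.2 (pos_of_mul_pos_right (by linarith) (sq_nonneg (u 0 1)))
  · exact fun g hg ↦ Real.sqrt_le_iff.2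
      ⟨hR, (gramTrace_le_frobSq H.le_one g).trans (hs g hg).2.2⟩
  · exact fun t ht ρ hρ hblock ↦ H.card_block_le hfin hR hρ (fun g hg ↦ hs g (ht hg)) fun g hg ↦
      ⟨(Real.le_sqrt' hρ).1 (hblock g hg).1, (Real.sqrt_le_left (by positivity)).1 (hblock g hg).2⟩

end IsMinimalRotation

end TorusCosets

section Conjugation

variable {Γ : Subgroup SL(2, ℝ)} {P : SL(2, ℝ) → Prop} {B : ℝ} {s : Finset SL(2, ℝ)}

lemma mem_conj_smul_iff {k h : SL(2, ℝ)} : h ∈ MulAut.conj k • Γ ↔ k⁻¹ * h * k ∈ Γ := by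
  rw [Subgroup.mem_pointwise_smul_iff_inv_smul_mem, ← map_inv, MulAut.smul_def, MulAut.conj_apply,
    inv_inv]

lemma finite_conj_smul (k : SL(2, ℝ)) (h : {g | g ∈ Γ ∧ P (k * g * k⁻¹)}.Finite) :
    {g | g ∈ MulAut.conj k • Γ ∧ P g}.Finite := by
  refine (h.image (MulAut.conj k)).subset fun g hg ↦ ⟨k⁻¹ * g * k, ?_, by simp [mul_assoc]⟩
  exact ⟨mem_conj_smul_iff.1 hg.1, by simpa [mul_assoc] using hg.2⟩

lemma card_le_of_conj_smul (k : SL(2, ℝ))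
    (hcard : ∀ t : Finset SL(2, ℝ), (∀ g ∈ t, g ∈ MulAut.conj k • Γ ∧ P g) → (#t : ℝ) ≤ B)
    (hs : ∀ g ∈ s, g ∈ Γ ∧ P (k * g * k⁻¹)) : (#s : ℝ) ≤ B := by
  rw [← card_map (MulAut.conj k).toEquiv.toEmbedding]
  refine hcard _ fun _ hg ↦ ?_
  obtain ⟨g, hgs, rfl⟩ := Finset.mem_map.1 hg
  exact ⟨Subgroup.smul_mem_pointwise_smul _ _ _ (hs g hgs).1, (hs g hgs).2⟩

end Conjugation

section Normalization

variable {g u : SL(2, ℝ)} {Γ : Subgroup SL(2, ℝ)}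

/-- The rotation of `ℍ` about `i` by the angle `-2θ`. -/
noncomputable def rotation (θ : ℝ) : SL(2, ℝ) :=
  ⟨!![Real.cos θ, -Real.sin θ; Real.sin θ, Real.cos θ], by
    rw [Matrix.det_fin_two_of]
    linear_combination Real.sin_sq_add_cos_sq θ⟩

lemma rotation_apply (θ : ℝ) : rotation θ 0 0 = Real.cos θ ∧ rotation θ 0 1 = -Real.sin θ ∧
    rotation θ 1 0 = Real.sin θ ∧ rotation θ 1 1 = Real.cos θ :=
  ⟨rfl, rfl, rfl, rfl⟩

lemma skew_rotation_conj (θ : ℝ) (g : SL(2, ℝ)) :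
    skew (rotation θ * g * (rotation θ)⁻¹) = skew g := by
  obtain ⟨h00, h01, h10, h11⟩ := rotation_apply θ
  rw [skew, skew, mul_inv_apply_zero, mul_inv_apply_one]
  simp only [mul_apply, h00, h01, h10, h11]
  linear_combination (g 0 1 - g 1 0) * Real.sin_sq_add_cos_sq θ

lemma frobSq_rotation_conj (θ : ℝ) (g : SL(2, ℝ)) :
    frobSq (rotation θ * g * (rotation θ)⁻¹) = frobSq g := by
  rw [frobSq_eq_trace_skew, frobSq_eq_trace_skew, trace_conj, skew_rotation_conj]

lemma rotation_conj_apply_sub (θ : ℝ) (g : SL(2, ℝ)) :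
    (rotation θ * g * (rotation θ)⁻¹) 0 0 - (rotation θ * g * (rotation θ)⁻¹) 1 1 =
      (g 0 0 - g 1 1) * Real.cos (2 * θ) - (g 0 1 + g 1 0) * Real.sin (2 * θ) := by
  obtain ⟨h00, h01, h10, h11⟩ := rotation_apply θ
  rw [mul_inv_apply_zero, mul_inv_apply_one, Real.cos_two_mul', Real.sin_two_mul]
  simp only [mul_apply, h00, h01, h10, h11]
  ring

lemma rotation_conj_apply_add (θ : ℝ) (g : SL(2, ℝ)) :
    (rotation θ * g * (rotation θ)⁻¹) 0 1 + (rotation θ * g * (rotation θ)⁻¹) 1 0 =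
      (g 0 0 - g 1 1) * Real.sin (2 * θ) + (g 0 1 + g 1 0) * Real.cos (2 * θ) := by
  obtain ⟨h00, h01, h10, h11⟩ := rotation_apply θ
  rw [mul_inv_apply_zero, mul_inv_apply_one, Real.cos_two_mul', Real.sin_two_mul]
  simp only [mul_apply, h00, h01, h10, h11]
  ring

lemma exists_rotation_conj_apply (g : SL(2, ℝ)) : ∃ θ,
    (rotation θ * g * (rotation θ)⁻¹) 0 0 = (rotation θ * g * (rotation θ)⁻¹) 1 1 ∧
      0 ≤ (rotation θ * g * (rotation θ)⁻¹) 0 1 + (rotation θ * g * (rotation θ)⁻¹) 1 0 := by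
  let w : ℂ := ⟨g 0 0 - g 1 1, g 0 1 + g 1 0⟩
  have hre : ‖w‖ * Real.cos w.arg = g 0 0 - g 1 1 := Complex.norm_mul_cos_arg w
  have him : ‖w‖ * Real.sin w.arg = g 0 1 + g 1 0 := Complex.norm_mul_sin_arg w
  have hangle : 2 * ((Real.pi / 2 - w.arg) / 2) = Real.pi / 2 - w.arg := by ring
  refine ⟨(Real.pi / 2 - w.arg) / 2, ?_, ?_⟩
  · rw [← sub_eq_zero, rotation_conj_apply_sub, hangle, Real.cos_pi_div_two_sub,
      Real.sin_pi_div_two_sub, ← hre, ← him]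
    ring
  · have : ‖w‖ * Real.cos w.arg * Real.cos w.arg + ‖w‖ * Real.sin w.arg * Real.sin w.arg = ‖w‖ := by
      linear_combination ‖w‖ * Real.sin_sq_add_cos_sq w.arg
    rw [rotation_conj_apply_add, hangle, Real.cos_pi_div_two_sub, Real.sin_pi_div_two_sub, ← hre,
      ← him, this]
    exact norm_nonneg w

/-- The elliptic and parabolic elements of `Γ` other than `±1` that lie close to `±1`, where
closeness is measured by `skew`. -/
def smallRotations (Γ : Subgroup SL(2, ℝ)) : Set SL(2, ℝ) :=
  {h | h ∈ Γ ∧ |h.1.trace| ≤ 2 ∧ |skew h| < 1 / 16 ∧ skew h ≠ 0}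

lemma inv_mem_smallRotations (hu : u ∈ smallRotations Γ) :
    u⁻¹ ∈ smallRotations Γ ∧ skew u⁻¹ = -skew u := by
  obtain ⟨hΓ, htr, hlt, hne⟩ := hu
  have hskew : skew u⁻¹ = -skew u := by
    rw [← one_mul u⁻¹, skew, mul_inv_apply_one, mul_inv_apply_zero, skew]
    simp [sub_eq_add_neg, add_comm]
  refine ⟨⟨Γ.inv_mem hΓ, ?_, ?_, ?_⟩, hskew⟩
  · simpa [Matrix.trace_fin_two, Matrix.adjugate_fin_two, add_comm] using htr
  · rwa [hskew, abs_neg]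
  · rwa [hskew, neg_ne_zero]

lemma exists_minimal_smallRotation (hfin : ∀ r, {g | g ∈ Γ ∧ frobSq g ≤ r}.Finite)
    (hne : (smallRotations Γ).Nonempty) :
    ∃ u ∈ smallRotations Γ, 0 < skew u ∧ ∀ h ∈ smallRotations Γ, skew u ≤ |skew h| := by
  have hfinite : (smallRotations Γ).Finite := (hfin 3).subset fun h ⟨hΓ, htr, hlt, _⟩ ↦ by
    refine ⟨hΓ, ?_⟩
    have htr₂ : h.1.trace ^ 2 ≤ 2 ^ 2 := sq_le_sq.2 (by rwa [abs_two])
    have hskew₂ : skew h ^ 2 ≤ 1 := (sq_le_one_iff_abs_le_one _).2 (by linarith)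
    rw [frobSq_eq_trace_skew]
    linarith
  obtain ⟨u, hu, hmin⟩ := Set.exists_min_image _ (fun h ↦ |skew h|) hfinite hne
  rcases hu.2.2.2.lt_or_gt with hneg | hpos
  · obtain ⟨hinv, hskew⟩ := inv_mem_smallRotations hu
    rw [abs_of_neg hneg, ← hskew] at hmin
    exact ⟨u⁻¹, hinv, by linarith, hmin⟩
  · rw [abs_of_pos hpos] at hmin
    exact ⟨u, hu, hpos, hmin⟩

lemma InTorus.skew_eq {κ : ℝ} (hg : InTorus κ g) : skew g = (1 + κ) * g 0 1 := by
  rw [skew, hg.2]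
  ring

lemma isMinimalRotation_of_minimal_skew (hu : u ∈ smallRotations Γ) (hpos : 0 < skew u)
    (hmin : ∀ h ∈ smallRotations Γ, skew u ≤ |skew h|) (hdiag : u 0 0 = u 1 1)
    (hsum : 0 ≤ u 0 1 + u 1 0) : IsMinimalRotation Γ (-u 1 0 / u 0 1) u := by
  obtain ⟨huΓ, htr, hlt, -⟩ := hu
  rw [abs_of_pos hpos] at hlt
  have hb : 0 < u 0 1 := by
    rw [skew] at hpos
    linarith
  have hc : u 1 0 ≤ 0 := by
    rw [Matrix.trace_fin_two, hdiag, ← two_mul] at htr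
    have htr₂ : (2 * u 1 1) ^ 2 ≤ 2 ^ 2 := sq_le_sq.2 (by rwa [abs_two])
    have hdet := det_eq_one u
    rw [hdiag] at hdet
    nlinarith
  have hκ : 0 ≤ -u 1 0 / u 0 1 := div_nonneg (by linarith) hb.le
  have huT : InTorus (-u 1 0 / u 0 1) u := ⟨hdiag, by field_simp⟩
  refine ⟨huΓ, huT, hb, ?_, hκ, (div_le_one hb).2 (by linarith), fun h hΓ hT hne ↦ ?_⟩
  · rw [skew] at hlt
    linarith
  · have hfactor : 0 < 1 + -u 1 0 / u 0 1 := by linarith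
    by_contra! hlt'
    have hskew : |skew h| < skew u := by
      rw [hT.skew_eq, huT.skew_eq, abs_mul, abs_of_pos hfactor]
      gcongr
    refine (hmin h ⟨hΓ, hT.abs_trace_le_two hκ, hskew.trans hlt, ?_⟩).not_gt hskew
    rw [hT.skew_eq]
    exact mul_ne_zero hfactor.ne' hne

lemma exists_isMinimalRotation_conj (hfin : ∀ r, {g | g ∈ Γ ∧ frobSq g ≤ r}.Finite)
    (hne : (smallRotations Γ).Nonempty) :
    ∃ θ κ u, IsMinimalRotation (MulAut.conj (rotation θ) • Γ) κ u := by
  obtain ⟨u, ⟨huΓ, htr, hlt, hne⟩, hpos, hmin⟩ := exists_minimal_smallRotation hfin hne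
  obtain ⟨θ, hdiag, hsum⟩ := exists_rotation_conj_apply u
  refine ⟨θ, _, _, isMinimalRotation_of_minimal_skew (u := rotation θ * u * (rotation θ)⁻¹)
    ⟨Subgroup.smul_mem_pointwise_smul _ _ _ huΓ, ?_, ?_, ?_⟩ ?_ ?_ hdiag hsum⟩
  · rwa [trace_conj]
  · rwa [skew_rotation_conj]
  · rwa [skew_rotation_conj]
  · rwa [skew_rotation_conj]
  · rintro h ⟨hΓ, htr, hlt, hne⟩
    have hconj : h = rotation θ * ((rotation θ)⁻¹ * h * rotation θ) * (rotation θ)⁻¹ := by group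
    rw [hconj, skew_rotation_conj] at hlt hne ⊢
    rw [hconj, trace_conj] at htr
    rw [skew_rotation_conj]
    exact hmin _ ⟨mem_conj_smul_iff.1 hΓ, htr, hlt, hne⟩

end Normalization

section Counting

variable {Γ : Subgroup SL(2, ℝ)} {σ R : ℝ} {s : Finset SL(2, ℝ)}

lemma card_hyperbolic_frobSq_le (hfin : ∀ r, {g | g ∈ Γ ∧ frobSq g ≤ r}.Finite) (hσ : 0 < σ)
    (hσ₁ : σ ≤ 1) (hsys : ∀ h ∈ Γ, 2 < |h.1.trace| → σ ^ 2 ≤ frobSq h - 2) (hR : 0 ≤ R)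
    (hs : ∀ g ∈ s, g ∈ Γ ∧ 2 < |g.1.trace| ∧ frobSq g ≤ R ^ 2) :
    (#s : ℝ) ≤ 2 ^ 43 * R ^ 2 / σ ^ 2 := by
  rcases (smallRotations Γ).eq_empty_or_nonempty with hempty | hne
  · refine card_le_of_no_small_rotation hσ hσ₁ hsys (fun h hΓ htr hlt ↦ ?_) hR
      fun g hg ↦ ⟨(hs g hg).1, (hs g hg).2.2⟩
    by_contra hne
    exact hempty.subset ⟨hΓ, htr, hlt, hne⟩
  · obtain ⟨θ, κ, u, H⟩ := exists_isMinimalRotation_conj hfin hne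
    have hfin' (r : ℝ) : {g | g ∈ MulAut.conj (rotation θ) • Γ ∧ frobSq g ≤ r}.Finite :=
      finite_conj_smul (P := (frobSq · ≤ r)) _ (by simpa only [frobSq_rotation_conj] using hfin r)
    calc (#s : ℝ) ≤ 2 ^ 13 * R ^ 2 :=
          card_le_of_conj_smul (P := fun g ↦ 2 < |g.1.trace| ∧ frobSq g ≤ R ^ 2) (rotation θ)
            (fun t ht ↦ H.card_le hfin' hR ht)
            (by simpa only [trace_conj, frobSq_rotation_conj] using hs)
      _ ≤ 2 ^ 43 * R ^ 2 := by gcongr <;> norm_num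
      _ ≤ 2 ^ 43 * R ^ 2 / σ ^ 2 :=
          le_div_self (by positivity) (by positivity) (pow_le_one₀ hσ.le hσ₁)

lemma frobSq_conj_eq_cosh_dist {k : SL(2, ℝ)} {z : ℍ} (hk : k • z = I) (g : SL(2, ℝ)) :
    frobSq (k * g * k⁻¹) = 2 * Real.cosh (dist z (g • z)) := by
  rw [frobSq_eq_cosh_dist, ← hk, smul_smul, inv_mul_cancel_right, mul_smul, dist_smul]

lemma two_add_sq_le_two_mul_cosh {x : ℝ} (hx : 0 ≤ x) : 2 + x ^ 2 ≤ 2 * Real.cosh x := by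
  have hsinh : x / 2 ≤ Real.sinh (x / 2) := Real.self_le_sinh_iff.2 (by positivity)
  have hcosh : Real.cosh x = 2 * Real.sinh (x / 2) ^ 2 + 1 := by
    have := Real.cosh_two_mul (x / 2)
    rw [mul_div_cancel₀ x two_ne_zero, Real.cosh_sq] at this
    linarith
  nlinarith

lemma two_mul_cosh_le_two_mul_exp {x y : ℝ} (hx : 0 ≤ x) (hxy : x ≤ y) :
    2 * Real.cosh x ≤ 2 * Real.exp y := by
  have h₁ : Real.exp x ≤ Real.exp y := Real.exp_le_exp.2 hxy
  have h₂ : Real.exp (-x) ≤ Real.exp y := Real.exp_le_exp.2 (by linarith)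
  rw [Real.cosh_eq]
  linarith

lemma card_hyperbolic_dist_le {z : ℍ} (hfin : ∀ r, {g | g ∈ Γ ∧ dist z (g • z) ≤ r}.Finite)
    (hσ : 0 < σ) (hσ₁ : σ ≤ 1) (hsys : ∀ h ∈ Γ, 2 < |h.1.trace| → σ ≤ dist z (h • z)) {j : ℝ}
    (hs : ∀ g ∈ s, g ∈ Γ ∧ 2 < |g.1.trace| ∧ dist z (g • z) ≤ j) :
    (#s : ℝ) ≤ 2 ^ 44 * Real.exp j / σ ^ 2 := by
  obtain ⟨k, hk⟩ := MulAction.exists_smul_eq SL(2, ℝ) z I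
  have hfrob (g : SL(2, ℝ)) := frobSq_conj_eq_cosh_dist hk g
  have hlower (g : SL(2, ℝ)) : 2 + dist z (g • z) ^ 2 ≤ frobSq (k * g * k⁻¹) :=
    (two_add_sq_le_two_mul_cosh dist_nonneg).trans_eq (hfrob g).symm
  have hfin' (r : ℝ) : {g | g ∈ MulAut.conj k • Γ ∧ frobSq g ≤ r}.Finite :=
    finite_conj_smul (P := (frobSq · ≤ r)) k <| (hfin r).subset fun g hg ↦
      ⟨hg.1, by nlinarith [hlower g, hg.2]⟩
  have hsys' : ∀ h ∈ MulAut.conj k • Γ, 2 < |h.1.trace| → σ ^ 2 ≤ frobSq h - 2 := by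
    intro h hΓ htr
    have hconj : h = k * (k⁻¹ * h * k) * k⁻¹ := by group
    rw [hconj, trace_conj] at htr
    have hdist := hsys _ (mem_conj_smul_iff.1 hΓ) htr
    have := hlower (k⁻¹ * h * k)
    rw [← hconj] at this
    nlinarith
  refine card_le_of_conj_smul (Γ := Γ)
    (P := fun g ↦ 2 < |g.1.trace| ∧ frobSq g ≤ √(2 * Real.exp j) ^ 2) k (fun t ht ↦ ?_)
    fun g hg ↦ ?_
  · refine (card_hyperbolic_frobSq_le hfin' hσ hσ₁ hsys' (Real.sqrt_nonneg _) ht).trans_eq ?_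
    rw [Real.sq_sqrt (by positivity)]
    ring
  · obtain ⟨hΓ, htr, hdist⟩ := hs g hg
    rw [trace_conj, hfrob, Real.sq_sqrt (by positivity)]
    exact ⟨hΓ, htr, two_mul_cosh_le_two_mul_exp dist_nonneg hdist⟩

lemma finite_dist_smul_le (hΓ : DiscreteTopology Γ) (z : ℍ) (r : ℝ) :
    {g | g ∈ Γ ∧ dist z (g • z) ≤ r}.Finite := by
  -- The topology on `SL(2, ℝ)` declared above agrees with Mathlib's only by unfolding.
  have := @instProperlyDiscontinuousSL2RSubgroup Γ hΓ
  have hfin := ProperlyDiscontinuousSMul.finite_disjoint_inter_image (Γ := Γ)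
    (isCompact_singleton (x := z)) (isCompact_closedBall z r)
  refine (hfin.image (↑)).subset fun g hg ↦ ⟨⟨g, hg.1⟩, ⟨g • z, ⟨z, rfl, rfl⟩, ?_⟩, rfl⟩
  exact Metric.mem_closedBall'.2 hg.2

end Counting

end HyperbolicCounting

theorem counting_hyperbolic_elements_general :
    ∃ C : ℝ, 0 < C ∧ ∀ Γ : Subgroup (Matrix.SpecialLinearGroup (Fin 2) ℝ), DiscreteTopology Γ →
      ∀ (z : UpperHalfPlane) (s : ℝ), 0 < s →
        (∀ γ ∈ Γ, 2 < |Matrix.trace (γ : Matrix (Fin 2) (Fin 2) ℝ)| → s ≤ dist z (γ • z)) →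
        ∀ j : ℝ,
          {γ : Matrix.SpecialLinearGroup (Fin 2) ℝ |
            γ ∈ Γ ∧ 2 < |Matrix.trace (γ : Matrix (Fin 2) (Fin 2) ℝ)| ∧
              dist z (γ • z) ≤ j}.Finite ∧
          (Nat.card {γ : Matrix.SpecialLinearGroup (Fin 2) ℝ //
            γ ∈ Γ ∧ 2 < |Matrix.trace (γ : Matrix (Fin 2) (Fin 2) ℝ)| ∧
              dist z (γ • z) ≤ j} : ℝ) ≤ C * Real.exp j / min 1 (s ^ 2) := by
  refine ⟨2 ^ 44, by positivity, fun Γ hΓ z s hs hsys j ↦ ?_⟩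
  have hball := HyperbolicCounting.finite_dist_smul_le hΓ z
  have hfin : {γ : Matrix.SpecialLinearGroup (Fin 2) ℝ | γ ∈ Γ ∧
      2 < |Matrix.trace (γ : Matrix (Fin 2) (Fin 2) ℝ)| ∧ dist z (γ • z) ≤ j}.Finite :=
    (hball j).subset fun γ hγ ↦ ⟨hγ.1, hγ.2.2⟩
  have hmin : min 1 (s ^ 2) = min 1 s ^ 2 := by
    rw [pow_left_monotoneOn.map_min (zero_le_one' ℝ) hs.le, one_pow]
  refine ⟨hfin, ?_⟩
  rw [hmin]
  refine (congrArg Nat.cast (Nat.card_eq_card_finite_toFinset hfin)).trans_le ?_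
  exact HyperbolicCounting.card_hyperbolic_dist_le hball (lt_min one_pos hs) (min_le_left 1 s)
    (fun γ hγ htr ↦ (min_le_right 1 s).trans (hsys γ hγ htr)) fun γ hγ ↦ hfin.mem_toFinset.1 hγ

/-- **Counting hyperbolic elements (Lemma 6.2 of the paper).** There is a universal
constant `C > 0` with the following property. Let `Γ` be a discrete subgroup of
`SL(2, ℝ)`, acting on the upper half-plane by Möbius transformations, and let
`H = {γ ∈ Γ : |tr γ| > 2}` be its set of hyperbolic elements. If the systole
`s = inf {d(z, γ·z) : z ∈ ℍ, γ ∈ H}` is positive, then for every `z ∈ ℍ` and `j > 0` the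
set `{γ ∈ H : d(z, γ·z) ≤ j}` is finite with cardinality at most `C * e^j / min 1 s²`. -/
theorem counting_hyperbolic_elements :
    ∃ C : ℝ, 0 < C ∧
      ∀ (Γ : Subgroup (Matrix.SpecialLinearGroup (Fin 2) ℝ)), DiscreteTopology Γ →
        ∀ s : ℝ,
          s = sInf {d : ℝ | ∃ (z : UpperHalfPlane) (γ : Matrix.SpecialLinearGroup (Fin 2) ℝ),
              γ ∈ Γ ∧ 2 < |Matrix.trace (γ : Matrix (Fin 2) (Fin 2) ℝ)| ∧
              d = dist z (γ • z)} →
          0 < s →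
          ∀ (z : UpperHalfPlane) (j : ℝ), 0 < j →
            ({γ : Matrix.SpecialLinearGroup (Fin 2) ℝ |
                γ ∈ Γ ∧ 2 < |Matrix.trace (γ : Matrix (Fin 2) (Fin 2) ℝ)| ∧
                dist z (γ • z) ≤ j}).Finite ∧
            (Nat.card {γ : Matrix.SpecialLinearGroup (Fin 2) ℝ //
                γ ∈ Γ ∧ 2 < |Matrix.trace (γ : Matrix (Fin 2) (Fin 2) ℝ)| ∧
                dist z (γ • z) ≤ j} : ℝ) ≤ C * Real.exp j / min 1 (s ^ 2) := by
  obtain ⟨C, hC, hcount⟩ := counting_hyperbolic_elements_general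
  refine ⟨C, hC, fun Γ hΓ s hs hpos z j _ ↦ hcount Γ hΓ z s hpos (fun γ hγ htr ↦ ?_) j⟩
  refine hs.trans_le (csInf_le ⟨0, ?_⟩ ⟨z, γ, hγ, htr, rfl⟩)
  rintro _ ⟨w, g, -, -, rfl⟩
  exact dist_nonneg
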